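/- For every constant c > 0, the satisfiability probability of a random Horn formula satisfies e^{−c} − o(1) ≤ Pr_{Φ∈Ω(n,⌊c·2ⁿ⌋)}[Φ satisfiable] ≤ e^{−c/4}/(1 − e^{−c/4}) + o(1); that is, liminf_{n→∞} Pr[Φ satisfiable] ≥ e^{−c} and limsup_{n→∞} Pr[Φ satisfiable] ≤ e^{−c/4}/(1 − e^{−c/4}). -/

import Mathlib

open scoped BigOperators

/-- A (possibly empty) Horn clause over variables `x₁,…,xₙ`: an optional positive
literal together with a finset of negated variables. -/
abbrev HClause (n : ℕ) := Option (Fin n) × Finset (Fin n)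

/-- A Horn clause over `n` variables: a nonempty `HClause`. -/
abbrev HornClause (n : ℕ) := {C : HClause n // C ≠ ((none, ∅) : HClause n)}

/-- An assignment satisfies a clause iff its positive literal is true or some
negated variable is false. -/
def clauseSat {n : ℕ} (σ : Fin n → Bool) (C : HClause n) : Prop :=
  (∃ i, C.1 = some i ∧ σ i = true) ∨ (∃ j ∈ C.2, σ j = false)

/-- A formula (an `m`-tuple of Horn clauses) is satisfiable. -/
def formulaSat {n m : ℕ} (Φ : Fin m → HornClause n) : Prop :=
  ∃ σ : Fin n → Bool, ∀ j, clauseSat σ (Φ j).1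

/-- The probability that a random Horn formula with `n` variables and `m` clauses,
chosen independently and uniformly at random from all nonempty Horn clauses
(the model `Ω(n,m)`), is satisfiable. -/
noncomputable def hornSatProb (n m : ℕ) : ℝ :=
  (Nat.card {Φ : Fin m → HornClause n // formulaSat Φ} : ℝ) /
    (Fintype.card (HornClause n) : ℝ) ^ m

open Classical in
/-- The assignment whose true variables are those in `T`. -/
noncomputable def asg {n : ℕ} (T : Finset (Fin n)) : Fin n → Bool := fun i => decide (i ∈ T)

lemma not_clauseSat_asg {n : ℕ} (T : Finset (Fin n)) (C : HClause n) :
    ¬ clauseSat (asg T) C ↔ (∀ i ∈ T, C.1 ≠ some i) ∧ C.2 ⊆ T := by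
  unfold clauseSat asg
  simp only [decide_eq_true_eq, decide_eq_false_iff_not, not_or, not_exists, not_and,
    Classical.not_not]
  constructor
  · rintro ⟨h1, h2⟩
    exact ⟨fun i hi h => h1 i h hi, fun j hj => h2 j hj⟩
  · rintro ⟨h1, h2⟩
    exact ⟨fun i h hi => h1 i hi h, fun j hj => h2 hj⟩

lemma card_horn (n : ℕ) : Fintype.card (HornClause n) = (n + 1) * 2 ^ n - 1 := by
  rw [Fintype.card_subtype_compl]
  simp

lemma asg_surj {n : ℕ} (σ : Fin n → Bool) : ∃ T, asg T = σ := by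
  classical
  refine ⟨Finset.univ.filter (fun i => σ i = true), ?_⟩
  funext i
  simp [asg]

lemma exists_min_model {n m : ℕ} (Φ : Fin m → HornClause n) (h : formulaSat Φ) :
    ∃ T : Finset (Fin n), (∀ j, clauseSat (asg T) (Φ j).1) ∧
      ∃ a : T → Fin m, Function.Injective a ∧
        ∀ v : T, (Φ (a v)).1.1 = some v.1 ∧ (Φ (a v)).1.2 ⊆ T.erase v.1 := by
  classical
  obtain ⟨σ, hσ⟩ := h
  obtain ⟨T₀, rfl⟩ := asg_surj σ
  obtain ⟨T, hT, hmin⟩ := Finset.exists_min_image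
    (Finset.univ.filter (fun T : Finset (Fin n) => ∀ j, clauseSat (asg T) (Φ j).1))
    Finset.card ⟨T₀, by simpa using hσ⟩
  simp only [Finset.mem_filter, Finset.mem_univ, true_and] at hT hmin
  refine ⟨T, hT, ?_⟩
  have key : ∀ v : T, ∃ j, (Φ j).1.1 = some v.1 ∧ (Φ j).1.2 ⊆ T.erase v.1 := by
    intro v
    have h1 : ¬ ∀ j, clauseSat (asg (T.erase v.1)) (Φ j).1 := by
      intro h
      have := hmin _ h
      have := Finset.card_erase_lt_of_mem v.2
      omega
    push Not at h1
    obtain ⟨j, hj⟩ := h1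
    rw [not_clauseSat_asg] at hj
    refine ⟨j, ?_, hj.2⟩
    by_contra hne
    refine (not_clauseSat_asg T (Φ j).1).2 ⟨?_, hj.2.trans (Finset.erase_subset _ _)⟩ (hT j)
    intro i hi
    by_cases hiv : i = v.1
    · rw [hiv]; exact hne
    · exact hj.1 i (Finset.mem_erase.2 ⟨hiv, hi⟩)
  choose a ha using key
  refine ⟨a, ?_, ha⟩
  intro v w hvw
  have h1 := (ha v).1
  rw [hvw, (ha w).1] at h1
  exact Subtype.ext (Option.some_injective _ h1).symm

open Classical in
lemma card_bad {n : ℕ} (T : Finset (Fin n)) :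
    (Finset.univ.filter (fun C : HornClause n => ¬ clauseSat (asg T) C.1)).card
      = (n + 1 - T.card) * 2 ^ T.card - 1 := by
  have h : (Finset.univ.filter (fun C : HornClause n => ¬ clauseSat (asg T) C.1)).map
      (Function.Embedding.subtype _) =
      ((Finset.univ \ T.map Function.Embedding.some) ×ˢ T.powerset).erase (none, ∅) := by
    ext ⟨o, B⟩
    simp only [Finset.mem_map, Finset.mem_filter, Finset.mem_univ, true_and, not_clauseSat_asg,
      Function.Embedding.subtype_apply, Finset.mem_erase, Finset.mem_product, Finset.mem_sdiff,
      Finset.mem_powerset, Function.Embedding.some_apply, not_exists, not_and]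
    constructor
    · rintro ⟨⟨C, hC⟩, ⟨h1, h2⟩, rfl⟩
      exact ⟨hC, fun i hi h => h1 i hi h.symm, h2⟩
    · rintro ⟨hC, h1, h2⟩
      exact ⟨⟨_, hC⟩, ⟨fun i hi h => h1 i hi h.symm, h2⟩, rfl⟩
  rw [← Finset.card_map, h, Finset.card_erase_of_mem, Finset.card_product,
    Finset.card_sdiff_of_subset (Finset.subset_univ _)]
  · simp
  · simp

open Classical in
lemma card_good {n : ℕ} (T : Finset (Fin n)) :
    (Finset.univ.filter (fun C : HornClause n => clauseSat (asg T) C.1)).card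
      = ((n + 1) * 2 ^ n - 1) - ((n + 1 - T.card) * 2 ^ T.card - 1) := by
  have h := Finset.card_filter_add_card_filter_not (s := (Finset.univ : Finset (HornClause n)))
    (fun C : HornClause n => clauseSat (asg T) C.1)
  rw [card_bad, Finset.card_univ, card_horn] at h
  omega

open Classical in
lemma card_sat_eq (n m : ℕ) : Nat.card {Φ : Fin m → HornClause n // formulaSat Φ} =
    (Finset.univ.filter (fun Φ : Fin m → HornClause n => formulaSat Φ)).card := by
  rw [Nat.card_eq_fintype_card, Fintype.card_subtype]

lemma card_sat_lower (n m : ℕ) :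
    (((n + 1) * 2 ^ n - 1) - n) ^ m ≤ Nat.card {Φ : Fin m → HornClause n // formulaSat Φ} := by
  classical
  rw [card_sat_eq]
  have h := card_good (∅ : Finset (Fin n))
  simp only [Finset.card_empty, Nat.sub_zero, pow_zero, mul_one, Nat.add_sub_cancel] at h
  rw [← h]
  calc _ = (Fintype.piFinset (fun _ : Fin m => (Finset.univ.filter
        (fun C : HornClause n => clauseSat (asg ∅) C.1)))).card := by
        rw [Fintype.card_piFinset]; simp
    _ ≤ _ := by
        apply Finset.card_le_card
        intro Φ hΦ
        simp only [Fintype.mem_piFinset, Finset.mem_filter, Finset.mem_univ, true_and] at hΦ ⊢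
        exact ⟨_, hΦ⟩

open Classical in
lemma card_def {n : ℕ} (T : Finset (Fin n)) (v : Fin n) (hv : v ∈ T) :
    (Finset.univ.filter (fun C : HornClause n => C.1.1 = some v ∧ C.1.2 ⊆ T.erase v)).card
      ≤ 2 ^ (T.card - 1) := by
  rw [← Finset.card_erase_of_mem hv, ← Finset.card_powerset]
  apply Finset.card_le_card_of_injOn (fun C => C.1.2)
  · intro C hC
    exact Finset.mem_coe.2 (Finset.mem_powerset.2 (Finset.mem_filter.1 (Finset.mem_coe.1 hC)).2.2)
  · intro C hC D hD h
    simp only [Finset.coe_filter, Finset.mem_univ, true_and, Set.mem_ofPred_eq] at hC hD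
    exact Subtype.ext (Prod.ext (hC.1.trans hD.1.symm) h)

/-- number of clauses satisfied by an assignment with `k` true variables -/
def goodCount (n k : ℕ) : ℕ := ((n + 1) * 2 ^ n - 1) - ((n + 1 - k) * 2 ^ k - 1)

lemma card_sat_upper (n m : ℕ) :
    Nat.card {Φ : Fin m → HornClause n // formulaSat Φ} ≤
    ∑ k ∈ Finset.range (n + 1), n.choose k *
      (m ^ k * ((2 ^ (k - 1)) ^ k * goodCount n k ^ (m - k))) := by
  classical
  rw [card_sat_eq]
  let W : (T : Finset (Fin n)) → (T → Fin m) → Fin m → Finset (HornClause n) := fun T a j =>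
    Finset.univ.filter (fun C : HornClause n => clauseSat (asg T) C.1 ∧
      ∀ v : T, a v = j → (C.1.1 = some v.1 ∧ C.1.2 ⊆ T.erase v.1))
  have hsub : (Finset.univ.filter (fun Φ : Fin m → HornClause n => formulaSat Φ)) ⊆
      Finset.univ.biUnion (fun T : Finset (Fin n) =>
        (Finset.univ.filter (fun a : T → Fin m => Function.Injective a)).biUnion
          (fun a => Fintype.piFinset (W T a))) := by
    intro Φ hΦ
    obtain ⟨T, hT, a, ha, hv⟩ := exists_min_model Φ (by simpa using hΦ)
    simp only [Finset.mem_biUnion, Finset.mem_univ, true_and, Finset.mem_filter,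
      Fintype.mem_piFinset, W]
    refine ⟨T, a, ha, fun j => ⟨hT j, ?_⟩⟩
    rintro v rfl
    exact hv v
  have hW : ∀ (T : Finset (Fin n)) (a : T → Fin m), Function.Injective a →
      (Fintype.piFinset (W T a)).card ≤
        (2 ^ (T.card - 1)) ^ T.card * goodCount n T.card ^ (m - T.card) := by
    intro T a ha
    rw [Fintype.card_piFinset]
    have himg : (Finset.univ.image a).card = T.card := by
      rw [Finset.card_image_of_injective _ ha]; simp
    rw [← Finset.prod_mul_prod_compl (Finset.univ.image a)]
    apply Nat.mul_le_mul
    · refine le_of_le_of_eq (Finset.prod_le_pow_card _ _ (2 ^ (T.card - 1)) ?_) (by rw [himg])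
      intro j hj
      obtain ⟨v, -, rfl⟩ := Finset.mem_image.1 hj
      refine le_trans (Finset.card_le_card ?_) (card_def T v.1 v.2)
      intro C hC
      simp only [W, Finset.mem_filter, Finset.mem_univ, true_and] at hC ⊢
      exact hC.2 v rfl
    · have : (Finset.univ.image a)ᶜ.card = m - T.card := by
        rw [Finset.card_compl, himg, Fintype.card_fin]
      rw [← this]
      apply Finset.prod_le_pow_card
      intro j hj
      unfold goodCount
      rw [← card_good]
      apply Finset.card_le_card
      intro C hC
      simp only [W, Finset.mem_filter, Finset.mem_univ, true_and] at hC ⊢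
      exact hC.1
  refine (Finset.card_le_card hsub).trans (Finset.card_biUnion_le.trans ?_)
  have h2 : ∀ T : Finset (Fin n), ((Finset.univ.filter
      (fun a : T → Fin m => Function.Injective a)).biUnion
          (fun a => Fintype.piFinset (W T a))).card ≤
      (fun k => m ^ k * ((2 ^ (k - 1)) ^ k * goodCount n k ^ (m - k))) T.card := by
    intro T
    refine (Finset.card_biUnion_le_card_mul _ _ _ (fun a ha => hW T a (by simpa using ha))).trans ?_
    apply Nat.mul_le_mul_right
    refine (Finset.card_filter_le _ _).trans ?_
    simp
  refine (Finset.sum_le_sum (fun T _ => h2 T)).trans ?_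
  have := Finset.sum_powerset_apply_card (x := (Finset.univ : Finset (Fin n)))
    (fun k => m ^ k * ((2 ^ (k - 1)) ^ k * goodCount n k ^ (m - k)))
  rw [Finset.powerset_univ] at this
  rw [this]
  simp

lemma prob_nonneg (n m : ℕ) : 0 ≤ hornSatProb n m := by
  unfold hornSatProb; positivity

lemma prob_le_one (n m : ℕ) : hornSatProb n m ≤ 1 := by
  classical
  unfold hornSatProb
  apply div_le_one_of_le₀ _ (by positivity)
  rw [card_sat_eq]
  have := Finset.card_filter_le (Finset.univ : Finset (Fin m → HornClause n)) (fun Φ => formulaSat Φ)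
  rw [Finset.card_univ, Fintype.card_fun, Fintype.card_fin] at this
  exact_mod_cast this

lemma succ_le_two_pow (n : ℕ) : (n : ℝ) + 1 ≤ 2 ^ n := by
  have : n + 1 ≤ 2 ^ n := Nat.lt_two_pow_self
  exact_mod_cast this

lemma card_horn_real (n : ℕ) : (Fintype.card (HornClause n) : ℝ) = (n + 1) * 2 ^ n - 1 := by
  rw [card_horn, Nat.cast_sub]
  · push_cast; ring
  · exact Nat.one_le_iff_ne_zero.2 (by positivity)

lemma prob_lower (c : ℝ) (hc : 0 < c) (n : ℕ) (hn : 1 ≤ n) :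
    Real.exp (-c) ≤ hornSatProb n ⌊c * 2 ^ n⌋₊ := by
  set m := ⌊c * 2 ^ n⌋₊ with hm
  have hmc : (m : ℝ) ≤ c * 2 ^ n := Nat.floor_le (by positivity)
  have h2 := succ_le_two_pow n
  have hn' : (1 : ℝ) ≤ n := by exact_mod_cast hn
  set M : ℝ := (n + 1) * (2 ^ n - 1) with hM
  have hMpos : 0 < M := by apply mul_pos <;> linarith
  have hN : (Fintype.card (HornClause n) : ℝ) = M + n := by rw [card_horn_real, hM]; ring
  have hcard : M ^ m ≤ (Nat.card {Φ : Fin m → HornClause n // formulaSat Φ} : ℝ) := by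
    have h := card_sat_lower n m
    have h' : (((n + 1) * 2 ^ n - 1 - n : ℕ) : ℝ) = M := by
      have h3 : n + 1 ≤ 2 ^ n := Nat.lt_two_pow_self
      have h4 : 1 + n ≤ (n + 1) * 2 ^ n := by nlinarith
      rw [Nat.sub_sub, Nat.cast_sub h4, hM]; push_cast; ring
    rw [← h']
    exact_mod_cast h
  unfold hornSatProb
  rw [hN, le_div_iff₀ (by positivity)]
  refine le_trans ?_ hcard
  have h5 : M + n ≤ M * Real.exp (n / M) := by
    have := Real.add_one_le_exp (n / M : ℝ)
    calc M + n = M * (n / M + 1) := by field_simp; ring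
      _ ≤ _ := by gcongr
  have h6 : (M + n) ^ m ≤ M ^ m * Real.exp c := by
    calc (M + n) ^ m ≤ (M * Real.exp (n / M)) ^ m := by gcongr
      _ = M ^ m * Real.exp (m * (n / M)) := by rw [mul_pow, ← Real.exp_nat_mul]
      _ ≤ _ := by
        gcongr
        rw [← mul_div_assoc, div_le_iff₀ hMpos]
        calc (m : ℝ) * n ≤ c * 2 ^ n * n := by gcongr
          _ = c * (2 ^ n * n) := by ring
          _ ≤ c * M := by
            apply mul_le_mul_of_nonneg_left _ hc.le
            rw [hM]; nlinarith
  calc Real.exp (-c) * (M + n) ^ m ≤ Real.exp (-c) * (M ^ m * Real.exp c) := by gcongr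
    _ = M ^ m * (Real.exp (-c) * Real.exp c) := by ring
    _ = M ^ m := by rw [← Real.exp_add]; simp

/-- The upper bound for the contribution of minimal models with `k` true variables. -/
noncomputable def termBound (c : ℝ) (n k : ℕ) : ℝ :=
  if k ≤ n then c ^ k * (2 ^ (k - 1)) ^ k *
    Real.exp (-((((n : ℝ) + 1 - k) * 2 ^ k - 1) / (n + 1) * (c - (n + 1) / 2 ^ n))) else 0

lemma goodCount_real (n k : ℕ) (hk : k ≤ n) :
    (goodCount n k : ℝ) = ((n + 1) * 2 ^ n - 1) - (((n : ℝ) + 1 - k) * 2 ^ k - 1) := by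
  classical
  obtain ⟨T, -, hT⟩ := Finset.exists_subset_card_eq (s := (Finset.univ : Finset (Fin n)))
    (n := k) (by simpa using hk)
  have h := Finset.card_filter_add_card_filter_not (s := (Finset.univ : Finset (HornClause n)))
    (fun C : HornClause n => clauseSat (asg T) C.1)
  rw [card_good, card_bad, Finset.card_univ, hT] at h
  change goodCount n k + _ = _ at h
  have h' : (goodCount n k : ℝ) + (((n + 1 - k) * 2 ^ k - 1 : ℕ) : ℝ) =
    Fintype.card (HornClause n) := by exact_mod_cast h
  have h1 : 1 ≤ (n + 1 - k) * 2 ^ k := by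
    have : 1 ≤ n + 1 - k := by omega
    exact Nat.one_le_iff_ne_zero.2 (by positivity)
  rw [card_horn_real, Nat.cast_sub h1, Nat.cast_mul, Nat.cast_sub (by omega)] at h'
  push_cast at h'
  linarith

lemma prob_upper (c : ℝ) (hc : 0 < c) (n : ℕ) (hn : 1 ≤ n) (hd : 0 ≤ c - (n + 1) / 2 ^ n) :
    hornSatProb n ⌊c * 2 ^ n⌋₊ ≤ ∑ k ∈ Finset.range (n + 1), termBound c n k := by
  set m := ⌊c * 2 ^ n⌋₊ with hm
  have hmc : (m : ℝ) ≤ c * 2 ^ n := Nat.floor_le (by positivity)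
  have hmc' : c * 2 ^ n < m + 1 := Nat.lt_floor_add_one _
  have h2 := succ_le_two_pow n
  have hn' : (1 : ℝ) ≤ n := by exact_mod_cast hn
  have hcn : (n : ℝ) + 1 ≤ c * 2 ^ n := by
    rw [sub_nonneg, div_le_iff₀ (by positivity)] at hd; exact hd
  have hnm : n ≤ m := by
    apply Nat.le_floor; linarith
  have hN := card_horn_real n
  set N : ℝ := (Fintype.card (HornClause n) : ℝ) with hNdef
  have hNpos : 0 < N := by rw [hN]; nlinarith
  have hcard := card_sat_upper n m
  have hcard' : (Nat.card {Φ : Fin m → HornClause n // formulaSat Φ} : ℝ) ≤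
      ∑ k ∈ Finset.range (n + 1), (n.choose k : ℝ) *
      ((m : ℝ) ^ k * ((2 ^ (k - 1)) ^ k * (goodCount n k : ℝ) ^ (m - k))) := by
    exact_mod_cast hcard
  unfold hornSatProb
  refine (div_le_div_of_nonneg_right hcard' (by positivity)).trans ?_
  rw [Finset.sum_div]
  apply Finset.sum_le_sum
  intro k hk
  have hkn : k ≤ n := by have := Finset.mem_range.1 hk; omega
  have hkn' : (k : ℝ) ≤ n := by exact_mod_cast hkn
  have hg := goodCount_real n k hkn
  rw [← hN] at hg
  rw [termBound, if_pos hkn]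
  set q : ℝ := ((n : ℝ) + 1 - k) * 2 ^ k - 1 with hq
  have hq0 : 0 ≤ q := by
    have : (1 : ℝ) ≤ 2 ^ k := one_le_pow₀ (by norm_num)
    nlinarith
  have hch : (n.choose k : ℝ) ≤ (n : ℝ) ^ k := by exact_mod_cast Nat.choose_le_pow n k
  have hsplit : N ^ m = N ^ k * N ^ (m - k) := by rw [← pow_add]; congr 1; omega
  have hG : ((goodCount n k : ℝ) / N) ^ (m - k) ≤ Real.exp (-(q / (n + 1) * (c - (n + 1) / 2 ^ n))) := by
    have e1 : (goodCount n k : ℝ) / N ≤ Real.exp (-(q / N)) := by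
      have := Real.add_one_le_exp (-(q / N))
      refine le_trans (le_of_eq ?_) this
      rw [hg]; field_simp; ring
    calc ((goodCount n k : ℝ) / N) ^ (m - k) ≤ (Real.exp (-(q / N))) ^ (m - k) := by gcongr
      _ = Real.exp (((m - k : ℕ) : ℝ) * (-(q / N))) := by rw [← Real.exp_nat_mul]
      _ ≤ _ := by
        apply Real.exp_le_exp.2
        rw [mul_neg, neg_le_neg_iff]
        rw [Nat.cast_sub (hkn.trans hnm)]
        have e2 : 2 ^ n * (c - (n + 1) / 2 ^ n) ≤ (m : ℝ) - k := by
          have : (2 : ℝ) ^ n * (c - (n + 1) / 2 ^ n) = c * 2 ^ n - (n + 1) := by field_simp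
          rw [this]; linarith
        have e3 : N ≤ (n + 1) * 2 ^ n := by rw [hN]; linarith
        calc q / (n + 1) * (c - (n + 1) / 2 ^ n)
            = (2 ^ n * (c - (n + 1) / 2 ^ n)) * (q / ((n + 1) * 2 ^ n)) := by field_simp
          _ ≤ (m - k) * (q / N) := by
            have e4 : q / ((n + 1) * 2 ^ n) ≤ q / N := by gcongr
            refine mul_le_mul e2 e4 (by positivity) (by linarith [show (n:ℝ) ≤ m by exact_mod_cast hnm])
  have hA : (n * m / N : ℝ) ≤ c := by
    rw [div_le_iff₀ hNpos]
    calc (n * m : ℝ) ≤ n * (c * 2 ^ n) := by gcongr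
      _ = c * (n * 2 ^ n) := by ring
      _ ≤ c * N := by
        apply mul_le_mul_of_nonneg_left _ hc.le
        rw [hN]; nlinarith
  calc (n.choose k : ℝ) * ((m : ℝ) ^ k * ((2 ^ (k - 1)) ^ k * (goodCount n k : ℝ) ^ (m - k))) / N ^ m
      ≤ (n : ℝ) ^ k * ((m : ℝ) ^ k * ((2 ^ (k - 1)) ^ k * (goodCount n k : ℝ) ^ (m - k))) / N ^ m := by
        gcongr
    _ = (n * m / N) ^ k * (2 ^ (k - 1)) ^ k * ((goodCount n k : ℝ) / N) ^ (m - k) := by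
        rw [hsplit, div_pow, div_pow, mul_pow]; field_simp
    _ ≤ _ := by gcongr

lemma tendsto_aux : Filter.Tendsto (fun n : ℕ => ((n : ℝ) + 1) / 2 ^ n) Filter.atTop (nhds 0) := by
  have h1 := tendsto_pow_const_div_const_pow_of_one_lt 1 (show (1 : ℝ) < 2 by norm_num)
  have h2 := tendsto_pow_const_div_const_pow_of_one_lt 0 (show (1 : ℝ) < 2 by norm_num)
  have := h1.add h2
  simp only [pow_one, pow_zero, add_zero, ← add_div] at this
  exact this

lemma termBound_tendsto (c : ℝ) (k : ℕ) :
    Filter.Tendsto (fun n => termBound c n k) Filter.atTop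
      (nhds (c ^ k * (2 ^ (k - 1)) ^ k * Real.exp (-(2 ^ k * c)))) := by
  have h1 : Filter.Tendsto (fun n : ℕ => ((((n : ℝ) + 1 - k) * 2 ^ k - 1) / (n + 1)))
      Filter.atTop (nhds (2 ^ k)) := by
    have h := (tendsto_one_div_add_atTop_nhds_zero_nat (𝕜 := ℝ)).const_mul ((k : ℝ) * 2 ^ k + 1)
    have h' := h.const_sub ((2 : ℝ) ^ k)
    simp only [mul_zero, sub_zero] at h'
    refine h'.congr (fun n => ?_)
    have : (n : ℝ) + 1 ≠ 0 := by positivity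
    field_simp
    ring
  have h2 := tendsto_aux.const_sub c
  rw [sub_zero] at h2
  have h3 := ((Real.continuous_exp.tendsto _).comp (h1.mul h2).neg).const_mul
    (c ^ k * (2 ^ (k - 1)) ^ k)
  refine h3.congr' ?_
  filter_upwards [Filter.eventually_ge_atTop k] with n hn
  rw [termBound, if_pos hn]
  rfl

/-- dominating sequence -/
noncomputable def domBound (c : ℝ) (k : ℕ) : ℝ :=
  c ^ k * (2 ^ (k - 1)) ^ k * Real.exp (-((2 ^ k / (k + 1) - 1) * (c / 2)))

lemma termBound_nonneg (c : ℝ) (hc : 0 < c) (n k : ℕ) : 0 ≤ termBound c n k := by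
  unfold termBound
  split_ifs <;> positivity

lemma termBound_le (c : ℝ) (hc : 0 < c) (n k : ℕ) (hd : c / 2 ≤ c - (n + 1) / 2 ^ n) :
    termBound c n k ≤ domBound c k := by
  unfold termBound domBound
  split_ifs with hk
  · have hk' : (k : ℝ) ≤ n := by exact_mod_cast hk
    have h0 : (0 : ℝ) ≤ k := by positivity
    gcongr
    · have h1 : (2 : ℝ) ^ k / (k + 1) ≤ ((n : ℝ) + 1 - k) * 2 ^ k / (n + 1) := by
        rw [div_le_div_iff₀ (by positivity) (by positivity)]
        have : (n : ℝ) + 1 ≤ (n + 1 - k) * (k + 1) := by nlinarith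
        have h2 : (0 : ℝ) < 2 ^ k := by positivity
        nlinarith
      have h2 : (1 : ℝ) ≤ 2 ^ k / (k + 1) := by
        rw [one_le_div (by positivity)]; exact succ_le_two_pow k
      have h3 : (1 : ℝ) / (n + 1) ≤ 1 := by
        rw [div_le_one (by positivity)]; linarith
      rw [sub_div]
      linarith
    · have h1 : (2 : ℝ) ^ k / (k + 1) ≤ ((n : ℝ) + 1 - k) * 2 ^ k / (n + 1) := by
        rw [div_le_div_iff₀ (by positivity) (by positivity)]
        have : (n : ℝ) + 1 ≤ (n + 1 - k) * (k + 1) := by nlinarith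
        have h2 : (0 : ℝ) < 2 ^ k := by positivity
        nlinarith
      have h3 : (1 : ℝ) / (n + 1) ≤ 1 := by
        rw [div_le_one (by positivity)]; linarith
      rw [sub_div]
      linarith
  · positivity

lemma domBound_summable (c : ℝ) (hc : 0 < c) : Summable (domBound c) := by
  apply Summable.of_norm_bounded_eventually_nat (g := fun k : ℕ => Real.exp (-(k : ℝ)))
    Real.summable_exp_neg_nat
  have h1 := tendsto_pow_const_div_const_pow_of_one_lt 3 (show (1 : ℝ) < 2 by norm_num)
  have hδ : 0 < 1 / (6 + 8 / c) := by positivity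
  filter_upwards [h1.eventually_le_const hδ, Filter.eventually_ge_atTop 1] with k hk hk1
  have hk1' : (1 : ℝ) ≤ k := by exact_mod_cast hk1
  rw [div_le_div_iff₀ (by positivity) (by positivity)] at hk
  have hk2 : (6 * c + 8) * (k : ℝ) ^ 3 ≤ c * 2 ^ k := by
    have : (6 * c + 8) * (k : ℝ) ^ 3 = c * ((k : ℝ) ^ 3 * (6 + 8 / c)) := by field_simp
    rw [this]
    apply mul_le_mul_of_nonneg_left _ hc.le
    linarith
  have hnn : 0 ≤ domBound c k := by unfold domBound; positivity
  rw [Real.norm_of_nonneg hnn]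
  have hcexp : c ^ k ≤ Real.exp (k * c) := by
    rw [Real.exp_nat_mul]
    gcongr
    linarith [Real.add_one_le_exp c]
  have h2exp : ((2 : ℝ) ^ (k - 1)) ^ k ≤ Real.exp (k * k) := by
    rw [Real.exp_nat_mul]
    gcongr
    have : (2 : ℝ) ^ k ≤ Real.exp (k * 1) := by
      rw [Real.exp_nat_mul]
      gcongr
      linarith [Real.add_one_le_exp 1]
    rw [mul_one] at this
    refine le_trans ?_ this
    exact pow_le_pow_right₀ (by norm_num) (by omega)
  unfold domBound
  calc _ ≤ Real.exp (k * c) * Real.exp (k * k) *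
        Real.exp (-((2 ^ k / (k + 1) - 1) * (c / 2))) := by gcongr
    _ = Real.exp (k * c + k * k + (-((2 ^ k / (k + 1) - 1) * (c / 2)))) := by
        rw [Real.exp_add, Real.exp_add]
    _ ≤ _ := by
        apply Real.exp_le_exp.2
        have h3 : 2 * k * c + 2 * k * k + 2 * k + c ≤ c * 2 ^ k / (k + 1 : ℝ) := by
          rw [le_div_iff₀ (by positivity)]
          refine le_trans ?_ hk2
          have a1 : (k : ℝ) ≤ k ^ 2 := by nlinarith
          have a2 : (1 : ℝ) ≤ k ^ 2 := by nlinarith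
          calc (2 * k * c + 2 * k * k + 2 * k + c) * (k + 1 : ℝ)
              ≤ ((3 * c + 4) * k ^ 2) * (2 * k) := by
                apply mul_le_mul _ (by linarith) (by positivity) (by positivity)
                nlinarith
            _ = _ := by ring
        have h4 : (2 : ℝ) ^ k / (k + 1) * c = c * 2 ^ k / (k + 1 : ℝ) := by ring
        nlinarith

lemma limit_term_le (c : ℝ) (hc : 0 < c) (hx : Real.exp (-c / 4) ≤ 1 / 2) (k : ℕ) :
    c ^ k * (2 ^ (k - 1)) ^ k * Real.exp (-(2 ^ k * c)) ≤ Real.exp (-c / 4) ^ (k + 1) := by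
  set x := Real.exp (-c / 4) with hxdef
  have hx0 : 0 < x := Real.exp_pos _
  have hcx : c * x ≤ 2 := by
    have h := Real.quadratic_le_exp_of_nonneg (show 0 ≤ c / 4 by positivity)
    have h1 : Real.exp (c / 4) * x = 1 := by
      rw [hxdef, ← Real.exp_add]; ring_nf; simp
    have h2 : c ≤ 2 * Real.exp (c / 4) := by nlinarith [sq_nonneg (c / 4 - 1)]
    nlinarith
  have hpow : (k + 1) ^ 2 ≤ 4 * 2 ^ k := by
    have hh : ∀ j : ℕ, (j + 3 + 1) ^ 2 ≤ 4 * 2 ^ (j + 3) := by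
      intro j
      induction j with
      | zero => norm_num
      | succ j ih =>
        have h5 : (j + 1 + 3 + 1) ^ 2 ≤ 2 * (j + 3 + 1) ^ 2 := by
          ring_nf
          have := Nat.zero_le (j ^ 2)
          omega
        have h6 : 2 ^ (j + 1 + 3) = 2 * 2 ^ (j + 3) := by ring
        rw [h6]
        omega
    match k with
    | 0 => norm_num
    | 1 => norm_num
    | 2 => norm_num
    | j + 3 => exact hh j
  obtain ⟨r, hr⟩ : ∃ r, 4 * 2 ^ k = (k + 1) + k + r :=
    ⟨4 * 2 ^ k - ((k + 1) + k), by
      have : (k + 1) + k ≤ (k + 1) ^ 2 := by nlinarith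
      omega⟩
  have hrk : k * k ≤ r := by nlinarith
  have hexp : Real.exp (-(2 ^ k * c)) = x ^ (k + 1) * x ^ k * x ^ r := by
    rw [← pow_add, ← pow_add, ← hr, hxdef, ← Real.exp_nat_mul]
    congr 1
    push_cast
    ring
  have h2 : ((2 : ℝ) ^ (k - 1)) ^ k * 2 ^ k = 2 ^ (k * k) := by
    rcases k with _ | k
    · simp
    · rw [← mul_pow, ← pow_succ, ← pow_mul]; simp
  rw [hexp]
  calc c ^ k * (2 ^ (k - 1)) ^ k * (x ^ (k + 1) * x ^ k * x ^ r)
      = x ^ (k + 1) * ((c * x) ^ k * (2 ^ (k - 1)) ^ k * x ^ r) := by rw [mul_pow]; ring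
    _ ≤ x ^ (k + 1) * (2 ^ k * (2 ^ (k - 1)) ^ k * (1 / 2) ^ r) := by gcongr
    _ = x ^ (k + 1) * (2 ^ (k * k) * (1 / 2) ^ r) := by rw [← h2]; ring
    _ ≤ x ^ (k + 1) * 1 := by
        gcongr
        rw [one_div, inv_pow, ← div_eq_mul_inv]
        apply div_le_one_of_le₀ _ (by positivity)
        exact pow_le_pow_right₀ (by norm_num) hrk
    _ = _ := mul_one _

/-- For every constant `c > 0`,
`e^{-c} - o(1) ≤ Pr[Φ satisfiable] ≤ e^{-c/4}/(1 - e^{-c/4}) + o(1)` for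
`Φ ∈ Ω(n, ⌊c·2ⁿ⌋)`; i.e. the liminf of the satisfiability probability is at
least `e^{-c}` and its limsup is at most `e^{-c/4}/(1 - e^{-c/4})`. -/
theorem horn_sat_prob_bounds (c : ℝ) (hc : 0 < c) :
    Real.exp (-c) ≤
        Filter.liminf (fun n : ℕ => hornSatProb n ⌊c * 2 ^ n⌋₊) Filter.atTop ∧
      Filter.limsup (fun n : ℕ => hornSatProb n ⌊c * 2 ^ n⌋₊) Filter.atTop ≤
        Real.exp (-c / 4) / (1 - Real.exp (-c / 4)) := by
  have hbdd : Filter.IsBoundedUnder (· ≥ ·) Filter.atTop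
      (fun n : ℕ => hornSatProb n ⌊c * 2 ^ n⌋₊) :=
    Filter.isBoundedUnder_of ⟨0, fun n => prob_nonneg _ _⟩
  have hbdd' : Filter.IsBoundedUnder (· ≤ ·) Filter.atTop
      (fun n : ℕ => hornSatProb n ⌊c * 2 ^ n⌋₊) :=
    Filter.isBoundedUnder_of ⟨1, fun n => prob_le_one _ _⟩
  constructor
  · apply Filter.le_liminf_of_le hbdd'.isCoboundedUnder_ge
    filter_upwards [Filter.eventually_ge_atTop 1] with n hn
    exact prob_lower c hc n hn
  · have hx1 : Real.exp (-c / 4) < 1 := by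
      rw [← Real.exp_zero]; exact Real.exp_lt_exp.2 (by linarith)
    have hx0 : 0 < Real.exp (-c / 4) := Real.exp_pos _
    rcases le_total (Real.exp (-c / 4)) (1 / 2) with hx | hx
    · have hev : ∀ᶠ n : ℕ in Filter.atTop, c / 2 ≤ c - ((n : ℝ) + 1) / 2 ^ n := by
        filter_upwards [tendsto_aux.eventually_le_const (show 0 < c / 2 by positivity)] with n hn
        linarith
      have hT := tendsto_tsum_of_dominated_convergence (domBound_summable c hc)
        (termBound_tendsto c) (by
          filter_upwards [hev] with n hn k
          rw [Real.norm_of_nonneg (termBound_nonneg c hc n k)]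
          exact termBound_le c hc n k hn)
      have hle : ∀ᶠ n : ℕ in Filter.atTop,
          hornSatProb n ⌊c * 2 ^ n⌋₊ ≤ ∑' k, termBound c n k := by
        filter_upwards [hev, Filter.eventually_ge_atTop 1] with n hn hn1
        refine (prob_upper c hc n hn1 (by linarith)).trans (le_of_eq ?_)
        symm
        apply tsum_eq_sum
        intro k hk
        rw [termBound, if_neg]
        simpa [Nat.lt_succ_iff] using hk
      have hgeo : HasSum (fun k : ℕ => Real.exp (-c / 4) ^ (k + 1))
          (Real.exp (-c / 4) / (1 - Real.exp (-c / 4))) := by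
        have := (hasSum_geometric_of_lt_one hx0.le hx1).mul_left (Real.exp (-c / 4))
        simpa [pow_succ', div_eq_mul_inv] using this
      calc _ ≤ Filter.limsup (fun n : ℕ => ∑' k, termBound c n k) Filter.atTop :=
            Filter.limsup_le_limsup hle hbdd.isCoboundedUnder_le hT.isBoundedUnder_le
        _ = ∑' k : ℕ, c ^ k * (2 ^ (k - 1)) ^ k * Real.exp (-(2 ^ k * c)) := hT.limsup_eq
        _ ≤ ∑' k : ℕ, Real.exp (-c / 4) ^ (k + 1) := by
            have hl := limit_term_le c hc hx
            exact Summable.tsum_le_tsum hl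
              (Summable.of_nonneg_of_le (fun k => by positivity) hl hgeo.summable) hgeo.summable
        _ = _ := hgeo.tsum_eq
    · apply Filter.limsup_le_of_le hbdd.isCoboundedUnder_le
      refine Filter.Eventually.of_forall (fun n => (prob_le_one _ _).trans ?_)
      rw [one_le_div (by linarith)]
      linarith
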